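/- (MALA and patched MALA agree up to exponentially small terms.) Let U satisfy Assumption 1. Provided E_⋆ > 0 is sufficiently small, there exist θ ∈ (0, β−c) and positive constants C₁, C₂, h_c such that for every x ∈ R_h, every stepsize h < h_c and every T > 0, one has sup_{t ∈ [0,T]} ‖P_h^{⌊t/h⌋}(x,·) − P̄_h^{⌊t/h⌋}(x,·)‖_TV ≤ C₁·Φ_θ(x)·exp(−C₂·h^{−1/4})·(1 + T). -/

import Mathlib

/-!
Kill the MALA chain when it leaves `R = R_h`: the `k`-step law of the killed chain, a power of the
kernel restricted to `R`, lies below the laws of both MALA and patched MALA, so their total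
variation distance is at most twice the probability of leaving `R` within `k` steps. MALA preserves
the unnormalized Gibbs measure `ρ`, and one step from `x` has law at most `δ_x + M ρ` with
`M = (4πβ⁻¹h)^(-n/2) exp (β U x)`; hence `j` steps have law at most `δ_x + j M ρ`, and the exit
probability is at most `k² M ρ(Rᶜ)`, where `ρ(Rᶜ)` is of order `exp (-c h^(-1/4))` by Chernoff's
inequality. Half of this exponential absorbs the powers of `h`. The distance is also at most `2`,
and `min 1 a ≤ a ^ s` with `s = θ / β ≤ 1 / 2` turns `exp (β U x)` into `exp (θ U x)` and `T²` into
`1 + T`.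
-/

open MeasureTheory Real Filter
open scoped ENNReal

noncomputable section

abbrev Euc (n : ℕ) := EuclideanSpace ℝ (Fin n)

/-- Second derivative of `U` at `x` as a bilinear form. -/
def D2 {n : ℕ} (U : Euc n → ℝ) (x v w : Euc n) : ℝ :=
  iteratedFDeriv ℝ 2 U x ![v, w]

/-- Laplacian of `U` at `x`. -/
def lapl {n : ℕ} (U : Euc n → ℝ) (x : Euc n) : ℝ :=
  ∑ i, D2 U x (EuclideanSpace.single i 1) (EuclideanSpace.single i 1)

/-- Assumption 1 on the potential `U`. -/
structure Assumption1 (n : ℕ) (β : ℝ) (U : Euc n → ℝ) where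
  smooth : ContDiff ℝ 4 U
  c : ℝ
  d : ℝ
  EB : ℝ
  c_pos : 0 < c
  c_lt : c < β
  d_pos : 0 < d
  one_le : ∀ x, 1 ≤ U x
  quad_growth : ∀ C > (0:ℝ), ∃ E > (0:ℝ), ∀ x, U x > E → C * (1 + ‖x‖ ^ 2) ≤ U x
  driftB : ∀ x, U x > EB → lapl U x ≤ c * ‖gradient U x‖ ^ 2 - d * U x
  hess_lb : ∃ C : ℝ, 0 ≤ C ∧ ∀ x η : Euc n, -C * ‖η‖ ^ 2 ≤ D2 U x η η
  deriv_bound : ∃ C > (0:ℝ), ∀ x,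
    ‖iteratedFDeriv ℝ 4 U x‖ ⊔ ‖iteratedFDeriv ℝ 3 U x‖ ⊔ ‖iteratedFDeriv ℝ 2 U x‖ ⊔
      ‖gradient U x‖ ≤ C * U x

/-- The Gibbs measure with density `Z⁻¹ exp(-β U x)`. -/
def gibbs (n : ℕ) (β : ℝ) (U : Euc n → ℝ) : Measure (Euc n) :=
  volume.withDensity fun x => ENNReal.ofReal (exp (-β * U x) / ∫ y, exp (-β * U y))

/-- Total variation distance, `‖μ - ν‖_TV = 2 sup_A |μ(A) - ν(A)|`. -/
def tvDist {α : Type*} [MeasurableSpace α] (μ ν : Measure α) : ℝ :=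
  2 * ⨆ A : {A : Set α // MeasurableSet A}, |(μ A.1).toReal - (ν A.1).toReal|

/-- Forward Euler transition density `q_h(x,y)`. -/
def eulerDensity (n : ℕ) (β h : ℝ) (U : Euc n → ℝ) (x y : Euc n) : ℝ :=
  (4 * π * β⁻¹ * h) ^ (-(n : ℝ) / 2) *
    exp (-‖y - x + h • gradient U x‖ ^ 2 / (4 * β⁻¹ * h))

/-- MALA acceptance probability `α_h(x,y)`. -/
def accept (n : ℕ) (β h : ℝ) (U : Euc n → ℝ) (x y : Euc n) : ℝ :=
  min 1 ((eulerDensity n β h U y x * exp (-β * U y)) /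
         (eulerDensity n β h U x y * exp (-β * U x)))

/-- One-step MALA transition kernel. -/
def malaKernel (n : ℕ) (β h : ℝ) (U : Euc n → ℝ) (x : Euc n) : Measure (Euc n) :=
  volume.withDensity (fun y => ENNReal.ofReal (accept n β h U x y * eulerDensity n β h U x y))
  + (1 - ∫⁻ y, ENNReal.ofReal (accept n β h U x y * eulerDensity n β h U x y)) • Measure.dirac x

/-- `k`-step iterate of a transition kernel. -/
def iterKernel {α : Type*} [MeasurableSpace α] (κ : α → Measure α) : ℕ → α → Measure α
  | 0, x => Measure.dirac x
  | k + 1, x => (iterKernel κ k x).bind κ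

/-- The level set `R_h = {x : U(x) < E_⋆ h^{-1/4}}`. -/
def Rset (n : ℕ) (h Estar : ℝ) (U : Euc n → ℝ) : Set (Euc n) :=
  {x | U x < Estar * h ^ (-(1:ℝ) / 4)}

open scoped Classical in
/-- Patched MALA acceptance probability. -/
def acceptBar (n : ℕ) (β h Estar : ℝ) (U : Euc n → ℝ) (x y : Euc n) : ℝ :=
  if x ∈ Rset n h Estar U ∧ y ∈ Rset n h Estar U then accept n β h U x y else 0

/-- One-step patched MALA transition kernel. -/
def patchedKernel (n : ℕ) (β h Estar : ℝ) (U : Euc n → ℝ) (x : Euc n) : Measure (Euc n) :=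
  volume.withDensity
    (fun y => ENNReal.ofReal (acceptBar n β h Estar U x y * eulerDensity n β h U x y))
  + (1 - ∫⁻ y, ENNReal.ofReal (acceptBar n β h Estar U x y * eulerDensity n β h U x y)) •
      Measure.dirac x

/-- Standard Gaussian measure `N(0, I)` on `ℝ^n`. -/
def stdGaussian (n : ℕ) : Measure (Euc n) :=
  volume.withDensity fun ξ => ENNReal.ofReal ((2 * π) ^ (-(n : ℝ) / 2) * exp (-‖ξ‖ ^ 2 / 2))

/-- Forward Euler transition kernel. -/
def eulerKernel (n : ℕ) (β h : ℝ) (U : Euc n → ℝ) (x : Euc n) : Measure (Euc n) :=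
  volume.withDensity fun y => ENNReal.ofReal (eulerDensity n β h U x y)

section TotalVariation

variable {X : Type*} [MeasurableSpace X]

lemma tvDist_le_of_common_lower_bound {σ μ ν : Measure X} [IsProbabilityMeasure μ]
    [IsProbabilityMeasure ν] (hμ : σ ≤ μ) (hν : σ ≤ ν) :
    tvDist μ ν ≤ 2 * (1 - σ.real Set.univ) := by
  have : IsFiniteMeasure σ := isFiniteMeasure_of_le μ hμ
  have excess_le {τ : Measure X} [IsProbabilityMeasure τ] (hτ : σ ≤ τ) {A : Set X}
      (hA : MeasurableSet A) : τ.real A - σ.real A ≤ 1 - σ.real Set.univ := by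
    have hAc : σ.real Aᶜ ≤ τ.real Aᶜ := ENNReal.toReal_mono (measure_ne_top _ _) (hτ _)
    rw [measureReal_compl hA, probReal_compl_eq_one_sub hA] at hAc
    linarith
  have : Nonempty {A : Set X // MeasurableSet A} := ⟨⟨∅, .empty⟩⟩
  refine mul_le_mul_of_nonneg_left (ciSup_le fun ⟨A, hA⟩ ↦ ?_) zero_le_two
  change |μ.real A - ν.real A| ≤ _
  have hσμ : σ.real A ≤ μ.real A := ENNReal.toReal_mono (measure_ne_top _ _) (hμ _)
  have hσν : σ.real A ≤ ν.real A := ENNReal.toReal_mono (measure_ne_top _ _) (hν _)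
  rw [abs_le]
  constructor <;> linarith [excess_le hμ hA, excess_le hν hA]

lemma tvDist_le_two (μ ν : Measure X) [IsProbabilityMeasure μ] [IsProbabilityMeasure ν] :
    tvDist μ ν ≤ 2 := by
  simpa using tvDist_le_of_common_lower_bound (Measure.zero_le μ) (Measure.zero_le ν)

end TotalVariation

section KernelPowers

open ProbabilityTheory

variable {X : Type*} [MeasurableSpace X] {κ η : Kernel X X} {ρ : Measure X} {R : Set X}
  {M : ℝ≥0∞} {x : X}

lemma iterKernel_eq_pow (κ : Kernel X X) (k : ℕ) (x : X) : iterKernel κ k x = (κ ^ k) x := by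
  induction k with
  | zero => rw [iterKernel, pow_zero]; exact (Kernel.id_apply x).symm
  | succ k ih => rw [iterKernel, ih, pow_succ']; exact (Kernel.comp_apply κ (κ ^ k) x).symm

lemma isMarkovKernel_pow (κ : Kernel X X) [IsMarkovKernel κ] (k : ℕ) :
    IsMarkovKernel (κ ^ k) := by
  induction k with
  | zero => exact inferInstanceAs (IsMarkovKernel Kernel.id)
  | succ k ih => rw [pow_succ']; exact inferInstanceAs (IsMarkovKernel (κ ∘ₖ (κ ^ k)))

lemma restrict_pow_le_pow (hR : MeasurableSet R) (hle : ∀ z ∈ R, (κ z).restrict R ≤ η z)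
    (hx : x ∈ R) (k : ℕ) : (κ.restrict hR ^ k) x ≤ (η ^ k) x := by
  induction k generalizing x with
  | zero => rfl
  | succ k ih =>
    refine Measure.le_intro fun s hs _ ↦ ?_
    rw [add_comm k 1, Kernel.pow_add_apply_eq_lintegral _ _ _ _ hs,
      Kernel.pow_add_apply_eq_lintegral _ _ _ _ hs, pow_one, pow_one, Kernel.restrict_apply]
    calc ∫⁻ z in R, (κ.restrict hR ^ k) z s ∂κ x
      _ ≤ ∫⁻ z in R, (η ^ k) z s ∂κ x := setLIntegral_mono' hR fun z hz ↦ ih hz s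
      _ ≤ ∫⁻ z, (η ^ k) z s ∂η x := lintegral_mono' (hle x hx) le_rfl

lemma one_le_restrict_pow_univ_add_sum [IsMarkovKernel κ] (hR : MeasurableSet R) (hx : x ∈ R)
    (k : ℕ) : 1 ≤ (κ.restrict hR ^ k) x Set.univ + ∑ j ∈ Finset.range k, (κ ^ (j + 1)) x Rᶜ := by
  induction k with
  | zero => exact (le_of_eq (measure_univ (μ := Measure.dirac x)).symm).trans le_self_add
  | succ k ih =>
    set σ := (κ.restrict hR ^ k) x
    have hσ : σ ≤ (κ ^ k) x := restrict_pow_le_pow hR (fun z _ ↦ Measure.restrict_le_self) hx k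
    have survive_or_exit : σ Set.univ
        ≤ (κ.restrict hR ^ (k + 1)) x Set.univ + (κ ^ (k + 1)) x Rᶜ := by
      calc σ Set.univ
        _ = ∫⁻ z, κ z R + κ z Rᶜ ∂σ := by simp [prob_add_prob_compl hR]
        _ = ∫⁻ z, κ z R ∂σ + ∫⁻ z, κ z Rᶜ ∂σ := lintegral_add_left (κ.measurable_coe hR) _
        _ ≤ ∫⁻ z, κ z R ∂σ + ∫⁻ z, κ z Rᶜ ∂(κ ^ k) x := by gcongr
        _ = _ := by simp [Kernel.pow_succ_apply_eq_lintegral, hR.compl, Kernel.restrict_apply, σ]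
    rw [Finset.sum_range_succ, ← add_assoc, add_right_comm]
    exact ih.trans (by gcongr)

lemma pow_apply_le_dirac_add (hinv : κ.Invariant ρ) (hle : κ x ≤ Measure.dirac x + M • ρ)
    (k : ℕ) : (κ ^ k) x ≤ Measure.dirac x + (k * M) • ρ := by
  induction k with
  | zero => exact Measure.le_add_right le_rfl
  | succ k ih =>
    refine Measure.le_intro fun s hs _ ↦ ?_
    have hκs : Measurable fun z ↦ κ z s := κ.measurable_coe hs
    calc (κ ^ (k + 1)) x s
      _ = ∫⁻ z, κ z s ∂(κ ^ k) x := Kernel.pow_succ_apply_eq_lintegral κ k x hs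
      _ ≤ ∫⁻ z, κ z s ∂(Measure.dirac x + (k * M) • ρ) := lintegral_mono' ih le_rfl
      _ = κ x s + k * M * ρ s := by
        rw [lintegral_add_measure, lintegral_dirac' _ hκs, lintegral_smul_measure,
          ← Measure.bind_apply hs κ.aemeasurable, hinv.def, smul_eq_mul]
      _ ≤ (Measure.dirac x + M • ρ) s + k * M * ρ s := by gcongr
      _ = (Measure.dirac x + ((k + 1 : ℕ) * M) • ρ) s := by
        simp only [Measure.add_apply, Measure.smul_apply, smul_eq_mul, Nat.cast_add, Nat.cast_one]
        ring

lemma sum_pow_apply_compl_le (hR : MeasurableSet R) (hinv : κ.Invariant ρ)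
    (hle : κ x ≤ Measure.dirac x + M • ρ) (hx : x ∈ R) (k : ℕ) :
    ∑ j ∈ Finset.range k, (κ ^ (j + 1)) x Rᶜ ≤ k ^ 2 * (M * ρ Rᶜ) := by
  have apply_compl_le (j : ℕ) (hj : j ∈ Finset.range k) :
      (κ ^ (j + 1)) x Rᶜ ≤ k * (M * ρ Rᶜ) := by
    calc (κ ^ (j + 1)) x Rᶜ
      _ ≤ (Measure.dirac x + ((j + 1 : ℕ) * M) • ρ) Rᶜ :=
        pow_apply_le_dirac_add hinv hle (j + 1) Rᶜ
      _ = (j + 1 : ℕ) * (M * ρ Rᶜ) := by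
        simp [Measure.dirac_apply' x hR.compl, hx, mul_assoc]
      _ ≤ k * (M * ρ Rᶜ) := by
        gcongr
        exact Finset.mem_range.mp hj
  refine (Finset.sum_le_card_nsmul _ _ _ apply_compl_le).trans_eq ?_
  rw [Finset.card_range, nsmul_eq_mul]
  ring

theorem tvDist_pow_le_of_restrict_le [IsMarkovKernel κ] [IsMarkovKernel η]
    (hR : MeasurableSet R) (hκη : ∀ z ∈ R, (κ z).restrict R ≤ η z) (hinv : κ.Invariant ρ)
    (hle : κ x ≤ Measure.dirac x + M • ρ) (hfin : M * ρ Rᶜ ≠ ∞) (hx : x ∈ R) (k : ℕ) :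
    tvDist ((κ ^ k) x) ((η ^ k) x) ≤ 2 * min 1 (k ^ 2 * (M * ρ Rᶜ).toReal) := by
  have := isMarkovKernel_pow κ k
  have := isMarkovKernel_pow η k
  set σ := (κ.restrict hR ^ k) x
  have hσκ : σ ≤ (κ ^ k) x := restrict_pow_le_pow hR (fun z _ ↦ Measure.restrict_le_self) hx k
  have hση : σ ≤ (η ^ k) x := restrict_pow_le_pow hR hκη hx k
  have : IsFiniteMeasure σ := isFiniteMeasure_of_le _ hσκ
  have survival : 1 - σ.real Set.univ ≤ k ^ 2 * (M * ρ Rᶜ).toReal := by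
    have hmass : 1 ≤ σ Set.univ + k ^ 2 * (M * ρ Rᶜ) :=
      (one_le_restrict_pow_univ_add_sum hR hx k).trans
        (by gcongr; exact sum_pow_apply_compl_le hR hinv hle hx k)
    have hmass_real := ENNReal.toReal_mono (by finiteness) hmass
    rw [ENNReal.toReal_add (by finiteness) (by finiteness), ENNReal.toReal_mul] at hmass_real
    simp only [ENNReal.toReal_one, ENNReal.toReal_pow, ENNReal.toReal_natCast] at hmass_real
    rw [Measure.real]
    linarith
  rw [mul_min_of_nonneg _ _ zero_le_two, mul_one]
  refine le_min (tvDist_le_two _ _) ((tvDist_le_of_common_lower_bound hσκ hση).trans ?_)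
  gcongr

end KernelPowers

section Metropolis

open ProbabilityTheory

variable {X : Type*} [MeasurableSpace X] {μ : Measure X} [SFinite μ] {a b : X → X → ℝ≥0∞}
  {w : X → ℝ≥0∞} {R : Set X} {M : ℝ≥0∞} {x : X}

/-- The Metropolis kernel whose accepted moves from `x` have density `a x` with respect to `μ`; the
remaining mass stays at `x`. Both summands are meant for a jointly measurable `a`:
`Kernel.withDensity` is `0` for a density that is not. -/
def metropolisKernel (μ : Measure X) [SFinite μ] (a : X → X → ℝ≥0∞) : Kernel X X :=
  Kernel.withDensity (Kernel.const X μ) a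
    + Kernel.withDensity Kernel.id fun x _ ↦ 1 - ∫⁻ y, a x y ∂μ

lemma metropolisKernel_apply (ha : Measurable (Function.uncurry a)) (x : X) :
    metropolisKernel μ a x
      = μ.withDensity (a x) + (1 - ∫⁻ y, a x y ∂μ) • Measure.dirac x := by
  have hrej : Measurable (Function.uncurry fun x (_ : X) ↦ 1 - ∫⁻ y, a x y ∂μ) :=
    (measurable_const.sub ha.lintegral_prod_right').comp measurable_fst
  rw [metropolisKernel, add_apply, Kernel.withDensity_apply _ ha,
    Kernel.withDensity_apply _ hrej, Kernel.const_apply, Kernel.id_apply, withDensity_const]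

lemma metropolisKernel_apply' (ha : Measurable (Function.uncurry a)) (x : X) {s : Set X}
    (hs : MeasurableSet s) :
    metropolisKernel μ a x s
      = ∫⁻ y in s, a x y ∂μ + s.indicator (fun z ↦ 1 - ∫⁻ y, a z y ∂μ) x := by
  by_cases hx : x ∈ s <;>
    simp [metropolisKernel_apply ha, withDensity_apply _ hs, Measure.dirac_apply' _ hs, hx]

lemma isMarkovKernel_metropolisKernel (ha : Measurable (Function.uncurry a))
    (hmass : ∀ x, ∫⁻ y, a x y ∂μ ≤ 1) : IsMarkovKernel (metropolisKernel μ a) where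
  isProbabilityMeasure x := ⟨by
    simp [metropolisKernel_apply' ha x .univ, add_tsub_cancel_of_le (hmass x)]⟩

lemma isReversible_metropolisKernel (ha : Measurable (Function.uncurry a)) (hw : Measurable w)
    (hbal : ∀ x y, w x * a x y = w y * a y x) :
    (metropolisKernel μ a).IsReversible (μ.withDensity w) := by
  intro A B hA hB
  have hrej : Measurable fun x ↦ 1 - ∫⁻ y, a x y ∂μ :=
    measurable_const.sub ha.lintegral_prod_right'
  have hflux : Measurable (Function.uncurry fun x y ↦ w x * a x y) :=
    (hw.comp measurable_fst).mul ha
  have flow_eq {C D : Set X} (hC : MeasurableSet C) (hD : MeasurableSet D) :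
      ∫⁻ x in C, metropolisKernel μ a x D ∂μ.withDensity w
        = ∫⁻ x in C, ∫⁻ y in D, w x * a x y ∂μ ∂μ
          + ∫⁻ x in C ∩ D, w x * (1 - ∫⁻ y, a x y ∂μ) ∂μ := by
    rw [setLIntegral_withDensity_eq_setLIntegral_mul _ hw
      ((metropolisKernel μ a).measurable_coe hD) hC]
    simp only [Pi.mul_apply, metropolisKernel_apply' ha _ hD, mul_add]
    rw [lintegral_add_right _ (hw.fun_mul (hrej.indicator hD)), Set.inter_comm,
      ← setLIntegral_indicator hD]
    simp only [Set.indicator_mul_right, lintegral_const_mul _ ha.of_uncurry_left]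
  rw [flow_eq hA hB, flow_eq hB hA, Set.inter_comm B A,
    lintegral_lintegral_swap hflux.aemeasurable]
  simp only [hbal]

lemma metropolisKernel_apply_le_dirac_add (ha : Measurable (Function.uncurry a))
    (hw : Measurable w) (hle : ∀ y, a x y ≤ M * w y) :
    metropolisKernel μ a x ≤ Measure.dirac x + M • μ.withDensity w := by
  rw [metropolisKernel_apply ha, add_comm, ← withDensity_smul _ hw]
  gcongr
  · exact (IsOrderedSMul.smul_le_smul_right _ _ tsub_le_self _).trans_eq (one_smul _ _)
  · exact withDensity_mono (ae_of_all _ hle)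

lemma metropolisKernel_restrict_le (ha : Measurable (Function.uncurry a))
    (hb : Measurable (Function.uncurry b)) (hR : MeasurableSet R) (hba : ∀ y, b x y ≤ a x y)
    (heq : ∀ y ∈ R, b x y = a x y) :
    (metropolisKernel μ a x).restrict R ≤ metropolisKernel μ b x := by
  rw [metropolisKernel_apply ha, metropolisKernel_apply hb, Measure.restrict_add,
    restrict_withDensity hR]
  gcongr ?_ + ?_
  · rw [← withDensity_indicator hR]
    refine withDensity_mono (ae_of_all _ fun y ↦ ?_)
    by_cases hy : y ∈ R <;> simp [hy, heq]
  · refine Measure.restrict_le_self.trans (IsOrderedSMul.smul_le_smul_right _ _ ?_ _)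
    exact tsub_le_tsub_left (lintegral_mono hba) _

end Metropolis
section Gaussian

variable {V : Type*} [NormedAddCommGroup V] [InnerProductSpace ℝ V] [FiniteDimensional ℝ V]
  [MeasurableSpace V] [BorelSpace V] {b : ℝ}

lemma integrable_exp_neg_mul_sq_norm (hb : 0 < b) :
    Integrable fun x : V ↦ exp (-b * ‖x‖ ^ 2) := by
  refine Integrable.of_integral_ne_zero ?_
  rw [GaussianFourier.integral_rexp_neg_mul_sq_norm hb]
  positivity

lemma integral_exp_neg_mul_sq_norm_add (hb : 0 < b) (v : V) :
    ∫ x : V, exp (-b * ‖x + v‖ ^ 2) = (π / b) ^ (Module.finrank ℝ V / 2 : ℝ) := by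
  rw [integral_add_right_eq_self fun x : V ↦ exp (-b * ‖x‖ ^ 2),
    GaussianFourier.integral_rexp_neg_mul_sq_norm hb]

end Gaussian

section Mala

variable {n : ℕ} {β h Estar : ℝ} {U : Euc n → ℝ}

lemma measurable_gradient {F : Type*} [NormedAddCommGroup F] [InnerProductSpace ℝ F]
    [CompleteSpace F] [MeasurableSpace F] [BorelSpace F] (f : F → ℝ) :
    Measurable (gradient f) :=
  (InnerProductSpace.toDual ℝ F).symm.continuous.measurable.comp (measurable_fderiv ℝ f)

lemma measurable_eulerDensity (n : ℕ) (β h : ℝ) (U : Euc n → ℝ) :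
    Measurable (Function.uncurry (eulerDensity n β h U)) := by
  have hgrad : Measurable fun p : Euc n × Euc n ↦ gradient U p.1 :=
    (measurable_gradient U).comp measurable_fst
  unfold eulerDensity Function.uncurry
  fun_prop

lemma eulerDensity_pos (hβ : 0 < β) (hh : 0 < h) (x y : Euc n) :
    0 < eulerDensity n β h U x y := by
  unfold eulerDensity
  positivity

lemma eulerDensity_le (hβ : 0 < β) (hh : 0 < h) (x y : Euc n) :
    eulerDensity n β h U x y ≤ (4 * π * β⁻¹ * h) ^ (-(n : ℝ) / 2) := by
  refine mul_le_of_le_one_right (by positivity) (exp_le_one_iff.mpr ?_)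
  rw [neg_div, neg_nonpos]
  positivity

lemma eulerDensity_eq_gaussian (x y : Euc n) :
    eulerDensity n β h U x y = (4 * π * β⁻¹ * h) ^ (-(n : ℝ) / 2) *
      exp (-(4 * β⁻¹ * h)⁻¹ * ‖y + (h • gradient U x - x)‖ ^ 2) := by
  rw [eulerDensity, show y + (h • gradient U x - x) = y - x + h • gradient U x by abel]
  congr 2
  ring

lemma lintegral_eulerDensity (hβ : 0 < β) (hh : 0 < h) (x : Euc n) :
    ∫⁻ y, ENNReal.ofReal (eulerDensity n β h U x y) = 1 := by
  have hb : 0 < (4 * β⁻¹ * h)⁻¹ := by positivity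
  have hint := (integrable_exp_neg_mul_sq_norm (V := Euc n) hb).comp_add_right
    (h • gradient U x - x)
  simp_rw [eulerDensity_eq_gaussian]
  rw [← ofReal_integral_eq_lintegral_ofReal (hint.const_mul _)
      (ae_of_all _ fun y ↦ by positivity), integral_const_mul, integral_exp_neg_mul_sq_norm_add hb,
    show π / (4 * β⁻¹ * h)⁻¹ = 4 * π * β⁻¹ * h by rw [div_inv_eq_mul]; ring,
    ← rpow_add (by positivity), finrank_euclideanSpace_fin, neg_div, neg_add_cancel, rpow_zero,
    ENNReal.ofReal_one]

lemma measurable_accept (hU : Measurable U) :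
    Measurable (Function.uncurry (accept n β h U)) := by
  have hq := measurable_eulerDensity n β h U
  exact measurable_const.min (((hq.comp measurable_swap).mul
    ((hU.comp measurable_snd).const_mul _).exp).div
      (hq.mul ((hU.comp measurable_fst).const_mul _).exp))

lemma exp_mul_accept_mul_eulerDensity_eq_min (hβ : 0 < β) (hh : 0 < h) (x y : Euc n) :
    exp (-β * U x) * (accept n β h U x y * eulerDensity n β h U x y)
      = min (eulerDensity n β h U x y * exp (-β * U x))
          (eulerDensity n β h U y x * exp (-β * U y)) := by
  have hflux : 0 < eulerDensity n β h U x y * exp (-β * U x) :=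
    mul_pos (eulerDensity_pos hβ hh x y) (exp_pos _)
  rw [accept, mul_left_comm, mul_comm (exp _), min_mul_of_nonneg _ _ hflux.le,
    div_mul_cancel₀ _ hflux.ne', one_mul]

lemma accept_mul_eulerDensity_le (hβ : 0 < β) (hh : 0 < h) (x y : Euc n) :
    accept n β h U x y * eulerDensity n β h U x y
      ≤ (4 * π * β⁻¹ * h) ^ (-(n : ℝ) / 2) * exp (β * U x) * exp (-β * U y) := by
  have hflux :=
    (exp_mul_accept_mul_eulerDensity_eq_min (U := U) hβ hh x y).trans_le (min_le_right _ _)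
  rw [neg_mul, exp_neg, inv_mul_le_iff₀ (exp_pos _)] at hflux
  calc accept n β h U x y * eulerDensity n β h U x y
    _ ≤ exp (β * U x) * (eulerDensity n β h U y x * exp (-β * U y)) := hflux
    _ ≤ exp (β * U x) * ((4 * π * β⁻¹ * h) ^ (-(n : ℝ) / 2) * exp (-β * U y)) := by
      gcongr
      exact eulerDensity_le hβ hh y x
    _ = _ := by ring

/-- Density of the accepted MALA moves from `x`. -/
def malaDensity (n : ℕ) (β h : ℝ) (U : Euc n → ℝ) (x y : Euc n) : ℝ≥0∞ :=
  ENNReal.ofReal (accept n β h U x y * eulerDensity n β h U x y)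

/-- Density of the accepted patched MALA moves from `x`. -/
def patchedDensity (n : ℕ) (β h Estar : ℝ) (U : Euc n → ℝ) (x y : Euc n) : ℝ≥0∞ :=
  ENNReal.ofReal (acceptBar n β h Estar U x y * eulerDensity n β h U x y)

/-- The Gibbs measure without its normalizing constant, so that it makes sense, as an invariant
measure of MALA, even when `exp (-β * U x)` is not integrable. -/
def unnormalizedGibbs (n : ℕ) (β : ℝ) (U : Euc n → ℝ) : Measure (Euc n) :=
  volume.withDensity fun x ↦ ENNReal.ofReal (exp (-β * U x))

lemma measurable_malaDensity (hU : Measurable U) :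
    Measurable (Function.uncurry (malaDensity n β h U)) :=
  ((measurable_accept hU).mul (measurable_eulerDensity n β h U)).ennreal_ofReal

lemma measurableSet_Rset (hU : Measurable U) : MeasurableSet (Rset n h Estar U) :=
  measurableSet_lt hU measurable_const

lemma uncurry_patchedDensity :
    Function.uncurry (patchedDensity n β h Estar U)
      = (Rset n h Estar U ×ˢ Rset n h Estar U).indicator
          (Function.uncurry (malaDensity n β h U)) := by
  ext ⟨x, y⟩
  by_cases hxy : x ∈ Rset n h Estar U ∧ y ∈ Rset n h Estar U <;>
    simp [patchedDensity, malaDensity, acceptBar, hxy]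

lemma measurable_patchedDensity (hU : Measurable U) :
    Measurable (Function.uncurry (patchedDensity n β h Estar U)) := by
  rw [uncurry_patchedDensity]
  exact (measurable_malaDensity hU).indicator
    ((measurableSet_Rset hU).prod (measurableSet_Rset hU))

lemma patchedDensity_le (x y : Euc n) :
    patchedDensity n β h Estar U x y ≤ malaDensity n β h U x y :=
  (congr_fun uncurry_patchedDensity (x, y)).trans_le (Set.indicator_le_self _ _ _)

lemma patchedDensity_of_mem {x y : Euc n} (hx : x ∈ Rset n h Estar U) (hy : y ∈ Rset n h Estar U) :
    patchedDensity n β h Estar U x y = malaDensity n β h U x y :=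
  (congr_fun uncurry_patchedDensity (x, y)).trans (Set.indicator_of_mem (Set.mk_mem_prod hx hy) _)

lemma malaKernel_eq_metropolisKernel (hU : Measurable U) :
    malaKernel n β h U = metropolisKernel volume (malaDensity n β h U) :=
  funext fun x ↦ (metropolisKernel_apply (measurable_malaDensity hU) x).symm

lemma patchedKernel_eq_metropolisKernel (hU : Measurable U) :
    patchedKernel n β h Estar U = metropolisKernel volume (patchedDensity n β h Estar U) :=
  funext fun x ↦ (metropolisKernel_apply (measurable_patchedDensity hU) x).symm

lemma lintegral_malaDensity_le_one (hβ : 0 < β) (hh : 0 < h) (x : Euc n) :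
    ∫⁻ y, malaDensity n β h U x y ≤ 1 := by
  rw [← lintegral_eulerDensity (U := U) hβ hh x]
  refine lintegral_mono fun y ↦ ENNReal.ofReal_le_ofReal ?_
  exact mul_le_of_le_one_left (eulerDensity_pos hβ hh x y).le (min_le_left _ _)

lemma malaDensity_detailed_balance (hβ : 0 < β) (hh : 0 < h) (x y : Euc n) :
    ENNReal.ofReal (exp (-β * U x)) * malaDensity n β h U x y
      = ENNReal.ofReal (exp (-β * U y)) * malaDensity n β h U y x := by
  rw [malaDensity, malaDensity, ← ENNReal.ofReal_mul (exp_pos _).le,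
    ← ENNReal.ofReal_mul (exp_pos _).le, exp_mul_accept_mul_eulerDensity_eq_min hβ hh,
    exp_mul_accept_mul_eulerDensity_eq_min hβ hh, min_comm]

lemma malaDensity_le (hβ : 0 < β) (hh : 0 < h) (x y : Euc n) :
    malaDensity n β h U x y
      ≤ ENNReal.ofReal ((4 * π * β⁻¹ * h) ^ (-(n : ℝ) / 2) * exp (β * U x))
        * ENNReal.ofReal (exp (-β * U y)) := by
  rw [← ENNReal.ofReal_mul (by positivity)]
  exact ENNReal.ofReal_le_ofReal (accept_mul_eulerDensity_le hβ hh x y)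

theorem tvDist_mala_patched_le (hβ : 0 < β) (hh : 0 < h) (hU : Measurable U)
    (hfin : unnormalizedGibbs n β U (Rset n h Estar U)ᶜ ≠ ∞) {x : Euc n}
    (hx : x ∈ Rset n h Estar U) (k : ℕ) :
    tvDist (iterKernel (malaKernel n β h U) k x) (iterKernel (patchedKernel n β h Estar U) k x)
      ≤ 2 * min 1 (k ^ 2 * ((4 * π * β⁻¹ * h) ^ (-(n : ℝ) / 2) * exp (β * U x)
          * (unnormalizedGibbs n β U).real (Rset n h Estar U)ᶜ)) := by
  have ha := measurable_malaDensity (β := β) (h := h) hU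
  have hb := measurable_patchedDensity (β := β) (h := h) (Estar := Estar) hU
  have hw : Measurable fun x ↦ ENNReal.ofReal (exp (-β * U x)) := by fun_prop
  have hmass := lintegral_malaDensity_le_one (U := U) hβ hh
  have := isMarkovKernel_metropolisKernel ha hmass
  have := isMarkovKernel_metropolisKernel hb fun x ↦
    (lintegral_mono (patchedDensity_le x)).trans (hmass x)
  have hinv := (isReversible_metropolisKernel (μ := volume) ha hw
    (malaDensity_detailed_balance hβ hh)).invariant
  have hexit := tvDist_pow_le_of_restrict_le (measurableSet_Rset hU)
    (fun z hz ↦ metropolisKernel_restrict_le ha hb (measurableSet_Rset hU) (patchedDensity_le z)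
      fun y hy ↦ patchedDensity_of_mem hz hy)
    hinv (metropolisKernel_apply_le_dirac_add ha hw (malaDensity_le hβ hh x))
    (ENNReal.mul_ne_top ENNReal.ofReal_ne_top hfin) hx k
  rw [malaKernel_eq_metropolisKernel hU, patchedKernel_eq_metropolisKernel hU,
    iterKernel_eq_pow, iterKernel_eq_pow]
  rwa [ENNReal.toReal_mul, ENNReal.toReal_ofReal (by positivity)] at hexit

end Mala

section Tail

variable {β γ E r : ℝ}

lemma setLIntegral_exp_neg_mul_le {X : Type*} [MeasurableSpace X] {μ : Measure X} {U : X → ℝ}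
    (hγ : γ ≤ β) (hint : IntegrableOn (fun x ↦ exp (-γ * U x)) {x | E < U x} μ)
    (hU : Measurable U) (hr : E < r) :
    ∫⁻ x in {x | r ≤ U x}, ENNReal.ofReal (exp (-β * U x)) ∂μ
      ≤ ENNReal.ofReal (exp (-(β - γ) * r) * ∫ x in {x | E < U x}, exp (-γ * U x) ∂μ) := by
  rw [← integral_const_mul, ofReal_integral_eq_lintegral_ofReal (hint.const_mul _)
    (ae_of_all _ fun x ↦ by positivity)]
  calc ∫⁻ x in {x | r ≤ U x}, ENNReal.ofReal (exp (-β * U x)) ∂μ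
    _ ≤ ∫⁻ x in {x | r ≤ U x}, ENNReal.ofReal (exp (-(β - γ) * r) * exp (-γ * U x)) ∂μ := by
      refine setLIntegral_mono' (measurableSet_le measurable_const hU) fun x hx ↦ ?_
      gcongr
      rw [← exp_add, exp_le_exp]
      linarith [mul_le_mul_of_nonneg_left hx.out (sub_nonneg.mpr hγ)]
    _ ≤ _ := lintegral_mono_set fun x hx ↦ hr.trans_le hx

lemma integrableOn_exp_neg_mul_of_quadratic_growth {V : Type*} [NormedAddCommGroup V]
    [InnerProductSpace ℝ V] [FiniteDimensional ℝ V] [MeasurableSpace V] [BorelSpace V]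
    {U : V → ℝ} {C : ℝ} (hC : 0 < C) (hγ : 0 < γ) (hU : Measurable U)
    (hgrowth : ∀ x, E < U x → C * ‖x‖ ^ 2 ≤ U x) :
    IntegrableOn (fun x ↦ exp (-γ * U x)) {x | E < U x} := by
  have hgauss : Integrable fun x : V ↦ exp (-(γ * C) * ‖x‖ ^ 2) :=
    integrable_exp_neg_mul_sq_norm (mul_pos hγ hC)
  refine hgauss.integrableOn.mono' (hU.const_mul _).exp.aestronglyMeasurable ?_
  refine ae_restrict_of_forall_mem (measurableSet_lt measurable_const hU) fun x hx ↦ ?_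
  rw [norm_of_nonneg (exp_pos _).le, exp_le_exp]
  linarith [mul_le_mul_of_nonneg_left (hgrowth x hx) hγ.le]

lemma unnormalizedGibbs_compl_Rset_le {n : ℕ} {h Estar : ℝ} {U : Euc n → ℝ} (hγ : γ ≤ β)
    (hint : IntegrableOn (fun x ↦ exp (-γ * U x)) {x | E < U x}) (hU : Measurable U)
    (hE : E < Estar * h ^ (-(1 : ℝ) / 4)) :
    unnormalizedGibbs n β U (Rset n h Estar U)ᶜ
      ≤ ENNReal.ofReal (exp (-(β - γ) * (Estar * h ^ (-(1 : ℝ) / 4)))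
          * ∫ x in {x | E < U x}, exp (-γ * U x)) := by
  have hcompl : (Rset n h Estar U)ᶜ = {x | Estar * h ^ (-(1 : ℝ) / 4) ≤ U x} := by
    ext x
    simp [Rset]
  rw [unnormalizedGibbs, withDensity_apply _ (measurableSet_Rset hU).compl, hcompl]
  exact setLIntegral_exp_neg_mul_le hγ hint hU hE

end Tail

section Stepsize

variable {a s A T E κ p q h : ℝ}

lemma rpow_le_mul_exp (hs : 0 < s) (hκ : 0 < κ) (ha : 0 ≤ a) :
    a ^ s ≤ (s / κ) ^ s * exp (κ * a) := by
  have hexp : κ * a / s ≤ exp (κ * a / s) := (lt_add_one _).le.trans (add_one_le_exp _)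
  calc a ^ s
    _ = (s / κ * (κ * a / s)) ^ s := by congr 1; field_simp
    _ ≤ (s / κ * exp (κ * a / s)) ^ s := by gcongr
    _ = (s / κ) ^ s * exp (κ * a) := by
      rw [mul_rpow (by positivity) (exp_pos _).le, ← exp_mul, div_mul_cancel₀ _ hs.ne']

lemma rpow_neg_le_mul_exp_rpow_neg (hp : 0 < p) (hq : 0 < q) (hκ : 0 < κ) (hh : 0 < h) :
    h ^ (-p) ≤ (p / q / κ) ^ (p / q) * exp (κ * h ^ (-q)) := by
  have hpow : (h ^ (-q)) ^ (p / q) = h ^ (-p) := by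
    rw [← rpow_mul hh.le, neg_mul, mul_div_cancel₀ _ hq.ne']
  exact hpow.symm.trans_le (rpow_le_mul_exp (div_pos hp hq) hκ (by positivity))

lemma exists_inv_sq_mul_rpow_neg_le (ha : 0 < a) (hp : 0 ≤ p) (hq : 0 < q) (hκ : 0 < κ) :
    ∃ K > 0, ∀ h > 0, (h ^ 2)⁻¹ * (a * h) ^ (-p) ≤ K * exp (κ * h ^ (-q)) := by
  refine ⟨a ^ (-p) * ((p + 2) / q / κ) ^ ((p + 2) / q), by positivity, fun h hh ↦ ?_⟩
  have hpow : (h ^ 2)⁻¹ * (a * h) ^ (-p) = a ^ (-p) * h ^ (-(p + 2)) := by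
    rw [mul_rpow ha.le hh.le, neg_add, rpow_add hh, rpow_neg hh.le 2, rpow_two]
    ring
  rw [hpow, mul_assoc]
  gcongr
  exact rpow_neg_le_mul_exp_rpow_neg (by linarith) hq hκ hh

lemma exists_forall_lt_mul_rpow_neg (E : ℝ) (ha : 0 < a) (hq : 0 < q) :
    ∃ hc > 0, ∀ h, 0 < h → h < hc → E < a * h ^ (-q) := by
  have hlim := (tendsto_rpow_neg_nhdsGT_zero (neg_lt_zero.mpr hq)).const_mul_atTop ha
  obtain ⟨hc, hc_pos, hsub⟩ :=
    mem_nhdsGT_iff_exists_Ioo_subset.mp (hlim.eventually_gt_atTop E)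
  exact ⟨hc, hc_pos, fun h hh hlt ↦ hsub ⟨hh, hlt⟩⟩

lemma min_one_le_rpow (ha : 0 ≤ a) (hs₀ : 0 ≤ s) (hs₁ : s ≤ 1) : min 1 a ≤ a ^ s := by
  rcases le_total a 1 with h1 | h1
  · exact (min_le_right _ _).trans (self_le_rpow_of_le_one ha h1 hs₁)
  · exact (min_le_left _ _).trans (one_le_rpow h1 hs₀)

lemma min_one_sq_mul_le (hA : 0 ≤ A) (hT : 0 ≤ T) (hs₀ : 0 ≤ s) (hs : s ≤ 1 / 2) :
    min 1 (T ^ 2 * A) ≤ A ^ s * (1 + T) := by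
  have hTs : (T ^ 2) ^ s ≤ 1 + T := by
    calc (T ^ 2) ^ s
      _ = T ^ (2 * s) := by rw [← rpow_two, rpow_mul hT]
      _ ≤ (1 + T) ^ (2 * s) := by gcongr; linarith
      _ ≤ (1 + T) ^ (1 : ℝ) := by gcongr <;> linarith
      _ = 1 + T := rpow_one _
  calc min 1 (T ^ 2 * A)
    _ ≤ (T ^ 2 * A) ^ s := min_one_le_rpow (by positivity) hs₀ (by linarith)
    _ = A ^ s * (T ^ 2) ^ s := by rw [mul_rpow (sq_nonneg T) hA, mul_comm]
    _ ≤ A ^ s * (1 + T) := by gcongr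

end Stepsize

section MalaComparison

variable {n : ℕ} {β γ E Estar : ℝ} {U : Euc n → ℝ}

lemma exists_sq_mul_exit_mass_le (hβ : 0 < β) (hγ : γ < β) (hU : Measurable U)
    (hint : IntegrableOn (fun x ↦ exp (-γ * U x)) {x | E < U x}) (hEstar : 0 < Estar) :
    ∃ K > 0, ∀ h, 0 < h → E < Estar * h ^ (-(1 : ℝ) / 4) → ∀ u T : ℝ, ∀ k : ℕ, k ≤ T / h →
      k ^ 2 * ((4 * π * β⁻¹ * h) ^ (-(n : ℝ) / 2) * exp (β * u)
          * (unnormalizedGibbs n β U).real (Rset n h Estar U)ᶜ)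
        ≤ T ^ 2 * (K * (exp (β * u)
            * exp (-((β - γ) * Estar / 2) * h ^ (-(1 : ℝ) / 4)))) := by
  set κ := (β - γ) * Estar / 2 with hκ_def
  have hκ : 0 < κ := half_pos (mul_pos (sub_pos.mpr hγ) hEstar)
  obtain ⟨K, hK, hKh⟩ := exists_inv_sq_mul_rpow_neg_le (a := 4 * π * β⁻¹) (p := n / 2)
    (q := 1 / 4) (by positivity) (by positivity) (by norm_num) hκ
  set D := ∫ x in {x | E < U x}, exp (-γ * U x)
  have hD : 0 ≤ D := integral_nonneg fun x ↦ (exp_pos _).le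
  refine ⟨K * (D + 1), mul_pos hK (add_pos_of_nonneg_of_pos hD one_pos), fun h hh hE u T k hk ↦ ?_⟩
  have hprefactor := hKh h hh
  rw [← neg_div, ← neg_div] at hprefactor
  set v := h ^ (-(1 : ℝ) / 4)
  set c := (4 * π * β⁻¹ * h) ^ (-(n : ℝ) / 2)
  have htail : (unnormalizedGibbs n β U).real (Rset n h Estar U)ᶜ
      ≤ exp (-(β - γ) * (Estar * v)) * D :=
    ENNReal.toReal_le_of_le_ofReal (by positivity)
      (unnormalizedGibbs_compl_Rset_le hγ.le hint hU hE)
  have hexp : exp (κ * v) * exp (-(β - γ) * (Estar * v)) = exp (-κ * v) := by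
    rw [← exp_add, hκ_def]
    ring_nf
  calc k ^ 2 * (c * exp (β * u) * (unnormalizedGibbs n β U).real (Rset n h Estar U)ᶜ)
    _ ≤ (T / h) ^ 2 * (c * exp (β * u) * (exp (-(β - γ) * (Estar * v)) * (D + 1))) := by
      gcongr
      exact htail.trans (by gcongr; linarith)
    _ = T ^ 2 * ((h ^ 2)⁻¹ * c * (exp (β * u) * exp (-(β - γ) * (Estar * v)) * (D + 1))) := by
      ring
    _ ≤ T ^ 2 * (K * exp (κ * v)
          * (exp (β * u) * exp (-(β - γ) * (Estar * v)) * (D + 1))) := by gcongr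
    _ = T ^ 2 * (K * (D + 1) * (exp (β * u)
          * (exp (κ * v) * exp (-(β - γ) * (Estar * v))))) := by ring
    _ = T ^ 2 * (K * (D + 1) * (exp (β * u) * exp (-κ * v))) := by rw [hexp]

theorem mala_close_to_patched_general (hβ : 0 < β) (hU : Differentiable ℝ U) (hγ : γ < β)
    (hint : IntegrableOn (fun x ↦ exp (-γ * U x)) {x | E < U x}) (hEstar : 0 < Estar) {θ : ℝ}
    (hθ : θ ∈ Set.Ioc 0 (β / 2)) :
    ∃ C₁ > (0 : ℝ), ∃ C₂ > (0 : ℝ), ∃ hc > (0 : ℝ), ∀ h : ℝ, 0 < h → h < hc → ∀ T > (0 : ℝ),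
      ∀ x ∈ Rset n h Estar U, ∀ t ∈ Set.Icc (0 : ℝ) T,
        tvDist (iterKernel (malaKernel n β h U) (Nat.floor (t / h)) x)
            (iterKernel (patchedKernel n β h Estar U) (Nat.floor (t / h)) x)
          ≤ C₁ * exp (θ * U x) * exp (-C₂ * h ^ (-(1 : ℝ) / 4)) * (1 + T) := by
  have hUm : Measurable U := hU.continuous.measurable
  obtain ⟨K, hK, hexit⟩ := exists_sq_mul_exit_mass_le hβ hγ hUm hint hEstar
  obtain ⟨hc, hc_pos, hE_lt⟩ :=
    exists_forall_lt_mul_rpow_neg E hEstar (q := 1 / 4) (by norm_num)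
  have hs : 0 < θ / β := div_pos hθ.1 hβ
  have hs_half : θ / β ≤ 1 / 2 := by rw [div_le_iff₀ hβ]; linarith [hθ.2]
  set κ := (β - γ) * Estar / 2
  have hκ : 0 < κ := half_pos (mul_pos (sub_pos.mpr hγ) hEstar)
  refine ⟨2 * K ^ (θ / β), by positivity, θ / β * κ, mul_pos hs hκ, hc, hc_pos,
    fun h hh hlt T hT x hx t ht ↦ ?_⟩
  have hE : E < Estar * h ^ (-(1 : ℝ) / 4) := by simpa only [neg_div] using hE_lt h hh hlt
  have hfin := ne_top_of_le_ne_top ENNReal.ofReal_ne_top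
    (unnormalizedGibbs_compl_Rset_le hγ.le hint hUm hE)
  have hk : (Nat.floor (t / h) : ℝ) ≤ T / h :=
    (Nat.floor_le (div_nonneg ht.1 hh.le)).trans (by gcongr; exact ht.2)
  set v := h ^ (-(1 : ℝ) / 4)
  calc tvDist (iterKernel (malaKernel n β h U) (Nat.floor (t / h)) x)
        (iterKernel (patchedKernel n β h Estar U) (Nat.floor (t / h)) x)
    _ ≤ 2 * min 1 (T ^ 2 * (K * (exp (β * U x) * exp (-κ * v)))) := by
      refine (tvDist_mala_patched_le hβ hh hUm hfin hx _).trans ?_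
      gcongr 2 * min 1 ?_
      exact hexit h hh hE (U x) T _ hk
    _ ≤ 2 * ((K * (exp (β * U x) * exp (-κ * v))) ^ (θ / β) * (1 + T)) := by
      gcongr
      exact min_one_sq_mul_le (by positivity) hT.le hs.le hs_half
    _ = 2 * K ^ (θ / β) * exp (θ * U x) * exp (-(θ / β * κ) * v) * (1 + T) := by
      rw [mul_rpow hK.le (by positivity), mul_rpow (exp_pos _).le (exp_pos _).le, ← exp_mul,
        ← exp_mul, show β * U x * (θ / β) = θ * U x by field_simp,
        show -κ * v * (θ / β) = -(θ / β * κ) * v by ring]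
      ring

lemma Assumption1.exists_integrableOn_exp_neg_mul (hU : Assumption1 n β U) (hγ : 0 < γ) :
    ∃ E, IntegrableOn (fun x ↦ exp (-γ * U x)) {x | E < U x} := by
  obtain ⟨E, -, hgrowth⟩ := hU.quad_growth 1 one_pos
  exact ⟨E, integrableOn_exp_neg_mul_of_quadratic_growth one_pos hγ
    hU.smooth.continuous.measurable fun x hx ↦ by linarith [hgrowth x hx]⟩

end MalaComparison

/-- MALA and patched MALA agree up to exponentially small terms. -/
theorem mala_close_to_patched (n : ℕ) (β : ℝ) (hβ : 0 < β)
    (U : Euc n → ℝ) (hU : Assumption1 n β U) :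
    ∃ Estar₀ > (0:ℝ), ∀ Estar : ℝ, 0 < Estar → Estar ≤ Estar₀ →
      ∃ θ ∈ Set.Ioo (0:ℝ) (β - hU.c), ∃ C₁ > (0:ℝ), ∃ C₂ > (0:ℝ), ∃ hc > (0:ℝ),
        ∀ h : ℝ, 0 < h → h < hc → ∀ T > (0:ℝ), ∀ x ∈ Rset n h Estar U,
          ∀ t ∈ Set.Icc (0:ℝ) T,
            tvDist (iterKernel (malaKernel n β h U) (Nat.floor (t/h)) x)
                   (iterKernel (patchedKernel n β h Estar U) (Nat.floor (t/h)) x)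
              ≤ C₁ * exp (θ * U x) * exp (-C₂ * h ^ (-(1:ℝ)/4)) * (1 + T) := by
  obtain ⟨E, hint⟩ := hU.exists_integrableOn_exp_neg_mul (half_pos hβ)
  have hc : 0 < β - hU.c := sub_pos.mpr hU.c_lt
  have hθ : 0 < min (β / 2) ((β - hU.c) / 2) := lt_min (half_pos hβ) (half_pos hc)
  refine ⟨1, one_pos, fun Estar hEstar _ ↦
    ⟨_, ⟨hθ, (min_le_right _ _).trans_lt (half_lt_self hc)⟩, ?_⟩⟩
  exact mala_close_to_patched_general hβ (hU.smooth.differentiable (by norm_num))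
    (half_lt_self hβ) hint hEstar ⟨hθ, min_le_left _ _⟩

end
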